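/- For every real number t, the function x ↦ x⁵·H(x, t) is integrable on (0, ∞) and ∫₀^∞ x⁵ H(x, t) dx = t⁶/6 + 10π²t⁴/3 + 56π⁴t²/3 + 992π⁶/63. -/

import Mathlib

open Real MeasureTheory

/-- Mirzakhani's kernel H(x, y). -/
noncomputable def H (x y : ℝ) : ℝ :=
  1 / (1 + Real.exp ((x + y) / 2)) + 1 / (1 + Real.exp ((x - y) / 2))

open Set Filter
open scoped Nat

/-!
Put `f u = 1 / (1 + exp (u / 2))`, so that `H x t = f (x + t) + f (x - t)`. Translating each summand
back to `f u` turns `∫ x ^ n * H x t` over `(0, ∞)` into `∫ ((u - t) ^ n + (u + t) ^ n) * f u` over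
`(0, ∞)` minus two integrals over bounded intervals. For odd `n` the symmetry `f (-u) = 1 - f u`
makes `f` disappear from the bounded part, which contributes `t ^ (n + 1) / (n + 1)`, and only odd
moments of `f` survive in the binomial expansion. Expanding `f` in a geometric series, such a moment
is an alternating zeta value at an even integer, that is, the Fourier series of a Bernoulli
polynomial at `1 / 2`.
-/

lemma sum_range_two_mul {M : Type*} [AddCommMonoid M] (f : ℕ → M) (n : ℕ) :
    ∑ j ∈ Finset.range (2 * n), f j = ∑ i ∈ Finset.range n, (f (2 * i) + f (2 * i + 1)) := by
  induction n with
  | zero => simp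
  | succ n ih => rw [Nat.mul_succ, Finset.sum_range_succ, Finset.sum_range_succ, ih,
      Finset.sum_range_succ, add_assoc]

lemma sub_pow_odd_add_add_pow_odd {R : Type*} [CommRing R] (x y : R) (k : ℕ) :
    (x - y) ^ (2 * k + 1) + (x + y) ^ (2 * k + 1) =
      2 * ∑ i ∈ Finset.range (k + 1),
        ((2 * k + 1).choose (2 * i + 1) : R) * y ^ (2 * (k - i)) * x ^ (2 * i + 1) := by
  rw [sub_eq_add_neg, add_pow, add_pow, ← Finset.sum_add_distrib, Finset.mul_sum,
    show 2 * k + 1 + 1 = 2 * (k + 1) by ring, sum_range_two_mul]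
  refine Finset.sum_congr rfl fun i hi ↦ ?_
  have hik : i ≤ k := Finset.mem_range_succ_iff.mp hi
  have hodd : Odd (2 * k + 1 - 2 * i) := ⟨k - i, by lia⟩
  have heven : 2 * k + 1 - (2 * i + 1) = 2 * (k - i) := by lia
  rw [hodd.neg_pow, heven, (even_two_mul (k - i)).neg_pow]
  ring

lemma integral_sub_pow_odd_add_add_pow_odd_mul {μ : Measure ℝ} {f : ℝ → ℝ} {k : ℕ}
    (hf : ∀ i ≤ k, Integrable (fun u ↦ u ^ (2 * i + 1) * f u) μ) (t : ℝ) :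
    ∫ u, ((u - t) ^ (2 * k + 1) + (u + t) ^ (2 * k + 1)) * f u ∂μ =
      2 * ∑ i ∈ Finset.range (k + 1),
        (2 * k + 1).choose (2 * i + 1) * t ^ (2 * (k - i)) * ∫ u, u ^ (2 * i + 1) * f u ∂μ := by
  simp_rw [sub_pow_odd_add_add_pow_odd, mul_assoc, Finset.sum_mul, mul_assoc]
  rw [integral_const_mul, integral_finsetSum]
  · simp_rw [integral_const_mul]
  · exact fun i hi ↦ ((hf i (Finset.mem_range_succ_iff.mp hi)).const_mul _).const_mul _

lemma integral_pow_mul_comp_div (g : ℝ → ℝ) (n : ℕ) {c : ℝ} (hc : 0 < c) :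
    ∫ u in Ioi 0, u ^ n * g (u / c) = c ^ (n + 1) * ∫ u in Ioi 0, u ^ n * g u := by
  have hscale := integral_comp_mul_left_Ioi' (fun u ↦ u ^ n * g (u / c)) 0 hc
  simp only [mul_zero, mul_pow, mul_div_cancel_left₀ _ hc.ne', mul_assoc, smul_eq_mul,
    integral_const_mul] at hscale
  rw [← hscale, pow_succ', mul_assoc]

lemma bernoulli_four : bernoulli 4 = -1 / 30 := by
  rw [bernoulli_eq_bernoulli'_of_ne_one (by decide), bernoulli'_four]

lemma bernoulli_six : bernoulli 6 = 1 / 42 := by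
  rw [bernoulli_eq_bernoulli'_of_ne_one (by decide), bernoulli'_def]
  norm_num [Finset.sum_range_succ, bernoulli'_eq_zero_of_odd (n := 5) (by decide), Nat.choose]

section Translation

variable {E : Type*} [NormedAddCommGroup E]

lemma integrableOn_Ioi_of_intervalIntegrable {g : ℝ → E} {μ : Measure ℝ} {a b : ℝ}
    (hab : IntervalIntegrable g μ a b) (hb : IntegrableOn g (Ioi b) μ) :
    IntegrableOn g (Ioi a) μ :=
  (hab.def'.union hb).mono_set fun x hx ↦ by grind [uIoc]

lemma integrableOn_Ioi_comp_add_right_iff (g : ℝ → E) (a t : ℝ) :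
    IntegrableOn (fun x ↦ g (x + t)) (Ioi a) ↔ IntegrableOn g (Ioi (a + t)) := by
  simpa [Function.comp_def] using (measurePreserving_add_right volume t).integrableOn_comp_preimage
    (measurableEmbedding_addRight t) (f := g) (s := Ioi (a + t))

variable [NormedSpace ℝ E]

lemma integral_Ioi_comp_add_right (g : ℝ → E) (a t : ℝ) :
    ∫ x in Ioi a, g (x + t) = ∫ x in Ioi (a + t), g x := by
  simpa using (measurePreserving_add_right volume t).setIntegral_preimage_emb
    (measurableEmbedding_addRight t) g (Ioi (a + t))

lemma integral_Ioi_comp_add_right_eq_sub {g : ℝ → E} {a t : ℝ}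
    (hg : IntervalIntegrable g volume a (a + t))
    (hgt : IntegrableOn (fun x ↦ g (x + t)) (Ioi a)) :
    ∫ x in Ioi a, g (x + t) = (∫ x in Ioi a, g x) - ∫ x in a..a + t, g x := by
  rw [integrableOn_Ioi_comp_add_right_iff] at hgt
  rw [integral_Ioi_comp_add_right,
    ← intervalIntegral.integral_interval_add_Ioi' hg hgt, add_sub_cancel_left]

end Translation

section Reflection

variable {p f : ℝ → ℝ}

lemma intervalIntegrable_continuous_mul_locallyIntegrable (hp : Continuous p)
    (hf : LocallyIntegrable f) (a b : ℝ) : IntervalIntegrable (fun u ↦ p u * f u) volume a b :=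
  (hf.integrableOn_isCompact isCompact_uIcc).intervalIntegrable.continuousOn_mul hp.continuousOn

lemma integral_odd_comp_sub_mul_add_comp_add_mul (hp : Continuous p) (hp_odd : p.Odd)
    (hf : LocallyIntegrable f) (hf_neg : ∀ u, f (-u) = 1 - f u) (t : ℝ) :
    (∫ u in 0..t, p (u - t) * f u) + (∫ u in 0..-t, p (u + t) * f u) = -∫ x in 0..t, p x := by
  have hpf : IntervalIntegrable (fun u ↦ p (u - t) * f u) volume 0 t :=
    intervalIntegrable_continuous_mul_locallyIntegrable (by fun_prop) hf 0 t
  have hp_sub : IntervalIntegrable (fun u ↦ p (u - t)) volume 0 t :=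
    Continuous.intervalIntegrable (by fun_prop) 0 t
  have odd_sub (u : ℝ) : p (u - t) = -p (t - u) := by rw [← neg_sub, hp_odd]
  have reflect : ∫ u in 0..-t, p (u + t) * f u = ∫ u in 0..t, (p (u - t) - p (u - t) * f u) := by
    calc
      _ = -∫ u in 0..t, p (-u + t) * f (-u) := by
        rw [intervalIntegral.integral_comp_neg (fun u ↦ p (u + t) * f u), neg_zero,
          intervalIntegral.integral_symm]
      _ = _ := by
        rw [← intervalIntegral.integral_neg]
        refine intervalIntegral.integral_congr fun u _ ↦ ?_
        simp only [hf_neg, odd_sub, neg_add_eq_sub]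
        ring
  have shift : ∫ u in 0..t, p (u - t) = -∫ x in 0..t, p x := by
    simp_rw [odd_sub, intervalIntegral.integral_neg]
    simp
  rw [reflect, intervalIntegral.integral_sub hp_sub hpf, shift]
  ring

lemma integral_Ioi_odd_mul_translates (hp : Continuous p) (hp_odd : p.Odd)
    (hf : LocallyIntegrable f) (hf_neg : ∀ u, f (-u) = 1 - f u)
    (hpf : ∀ s, IntegrableOn (fun x ↦ p x * f (x + s)) (Ioi 0)) (t : ℝ) :
    ∫ x in Ioi 0, p x * (f (x + t) + f (x - t)) =
      (∫ u in Ioi 0, (p (u - t) + p (u + t)) * f u) + ∫ x in 0..t, p x := by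
  have hint (s : ℝ) : IntervalIntegrable (fun u ↦ p (u - s) * f u) volume 0 s :=
    intervalIntegrable_continuous_mul_locallyIntegrable (by fun_prop) hf 0 s
  have translate (s : ℝ) : ∫ x in Ioi 0, p x * f (x + s) =
      (∫ u in Ioi 0, p (u - s) * f u) - ∫ u in 0..s, p (u - s) * f u := by
    simpa using integral_Ioi_comp_add_right_eq_sub (g := fun u ↦ p (u - s) * f u) (a := 0) (t := s)
      (by simpa using hint s) (by simpa using hpf s)
  have hsub (s : ℝ) : IntegrableOn (fun u ↦ p (u - s) * f u) (Ioi 0) := by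
    refine integrableOn_Ioi_of_intervalIntegrable (hint s) ?_
    rw [← zero_add s, ← integrableOn_Ioi_comp_add_right_iff]
    simpa using hpf s
  calc ∫ x in Ioi 0, p x * (f (x + t) + f (x - t))
    _ = (∫ x in Ioi 0, p x * f (x + t)) + ∫ x in Ioi 0, p x * f (x + -t) := by
      simp_rw [mul_add, ← integral_add (hpf t) (hpf (-t)), sub_eq_add_neg]
    _ = (∫ u in Ioi 0, p (u - t) * f u) + (∫ u in Ioi 0, p (u - -t) * f u) -
          ((∫ u in 0..t, p (u - t) * f u) + ∫ u in 0..-t, p (u - -t) * f u) := by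
      rw [translate, translate]
      ring
    _ = (∫ u in Ioi 0, (p (u - t) + p (u + t)) * f u) + ∫ x in 0..t, p x := by
      rw [← integral_add (hsub t) (hsub (-t))]
      simp_rw [sub_neg_eq_add, integral_odd_comp_sub_mul_add_comp_add_mul hp hp_odd hf hf_neg,
        add_mul, sub_neg_eq_add]

end Reflection

lemma sigmoid_neg_le_exp_neg (x : ℝ) : sigmoid (-x) ≤ exp (-x) := by
  rw [← sigmoid_mul_rexp_neg]
  exact mul_le_of_le_one_left (exp_nonneg _) (sigmoid_le_one _)

lemma integrableOn_Ioi_pow_mul_sigmoid_neg (n : ℕ) {b : ℝ} (hb : 0 < b) (c a : ℝ) :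
    IntegrableOn (fun x ↦ x ^ n * sigmoid (-(b * x + c))) (Ioi a) := by
  have hcont : Continuous fun x ↦ x ^ n * sigmoid (-(b * x + c)) := by fun_prop
  refine integrable_of_isBigO_exp_neg (half_pos hb) hcont.continuousOn ?_
  have hsig : (fun x ↦ sigmoid (-(b * x + c))) =O[atTop] fun x ↦ exp (-b * x) := by
    refine .of_bound (exp (-c)) (.of_forall fun x ↦ ?_)
    rw [norm_of_nonneg (sigmoid_nonneg _), norm_of_nonneg (exp_nonneg _), ← exp_add]
    exact (sigmoid_neg_le_exp_neg _).trans_eq (congrArg exp (by ring))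
  refine ((isLittleO_pow_exp_pos_mul_atTop n (half_pos hb)).isBigO.mul hsig).congr_right fun x ↦ ?_
  rw [← exp_add]
  congr 1
  ring

lemma hasSum_sigmoid_neg {u : ℝ} (hu : 0 < u) :
    HasSum (fun n : ℕ ↦ (-1) ^ n * exp (-(n + 1) * u)) (sigmoid (-u)) := by
  have hgeom := hasSum_geometric_of_abs_lt_one (r := -exp (-u)) (by simpa)
  convert! hgeom.mul_left (exp (-u)) using 1
  · ext n
    rw [neg_pow (exp (-u)), ← exp_nat_mul, mul_left_comm, ← exp_add]
    ring_nf
  · rw [← sigmoid_mul_rexp_neg, sigmoid_def, sub_neg_eq_add, mul_comm]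

lemma hasSum_integral_pow_mul_sigmoid_neg {k : ℕ} (hk : k ≠ 0) :
    HasSum (fun n : ℕ ↦ k ! * ((-1) ^ n / ((n : ℝ) + 1) ^ (k + 1)))
      (∫ u in Ioi 0, u ^ k * sigmoid (-u)) := by
  have hseries (u : ℝ) (hu : u ∈ Ioi 0) :
      HasSum (fun n : ℕ ↦ (-1 : ℂ) ^ n * exp (-((n : ℝ) + 1) * u)) (sigmoid (-u) : ℂ) := by
    exact_mod_cast hasSum_sigmoid_neg hu
  have hsummable : Summable fun n : ℕ ↦ ‖(-1 : ℂ) ^ n‖ / ((n : ℝ) + 1) ^ ((k : ℂ) + 1).re := by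
    have hk' : 1 < k + 1 := by lia
    simpa [← rpow_natCast] using (summable_nat_add_iff 1).mpr (summable_one_div_nat_pow.mpr hk')
  have hre : 0 < ((k : ℂ) + 1).re := by simpa using k.cast_add_one_pos
  rw [← Complex.hasSum_ofReal]
  convert! hasSum_mellin (fun n ↦ .inr n.cast_add_one_pos) hre hseries hsummable using 1
  · ext n
    rw [Complex.Gamma_nat_eq_factorial, ← Nat.cast_add_one k, Complex.cpow_natCast]
    push_cast
    ring
  · rw [mellin, ← integral_complex_ofReal]
    simp

lemma hasSum_neg_one_pow_div_succ_pow_even (k : ℕ) :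
    HasSum (fun n : ℕ ↦ (-1) ^ n / ((n : ℝ) + 1) ^ (2 * k + 2))
      ((-1) ^ k * π ^ (2 * k + 2) * (2 ^ (2 * k + 1) - 1) * bernoulli (2 * k + 2) /
        (2 * k + 2)!) := by
  have hcos : HasSum (fun n : ℕ ↦ 1 / (n : ℝ) ^ (2 * k + 2) * cos (2 * π * n * 2⁻¹)) _ :=
    hasSum_one_div_nat_pow_mul_cos k.succ_ne_zero (by norm_num)
  rw [← bernoulliFun, bernoulliFun_eval_half, ← hasSum_nat_add_iff' 1] at hcos
  convert! hcos.neg using 1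
  · ext n
    rw [show 2 * π * ((n + 1 : ℕ) : ℝ) * 2⁻¹ = (n + 1 : ℕ) * π by ring, cos_nat_mul_pi]
    push_cast
    ring
  · simp only [Nat.succ_eq_add_one, mul_add_one, Finset.sum_range_one, Nat.cast_zero]
    field_simp
    ring

lemma integral_pow_odd_mul_sigmoid_neg (k : ℕ) :
    ∫ u in Ioi 0, u ^ (2 * k + 1) * sigmoid (-u) =
      (-1) ^ k * π ^ (2 * k + 2) * (2 ^ (2 * k + 1) - 1) * bernoulli (2 * k + 2) /
        (2 * k + 2) := by
  have hsum := (hasSum_neg_one_pow_div_succ_pow_even k).mul_left ((2 * k + 1)! : ℝ)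
  rw [(hasSum_integral_pow_mul_sigmoid_neg (2 * k).succ_ne_zero).unique hsum,
    Nat.factorial_succ (2 * k + 1)]
  push_cast
  field_simp
  ring

lemma integral_pow_odd_mul_sigmoid_neg_half (k : ℕ) :
    ∫ u in Ioi 0, u ^ (2 * k + 1) * sigmoid (-(u / 2)) =
      (-1) ^ k * (2 * π) ^ (2 * k + 2) * (2 ^ (2 * k + 1) - 1) * bernoulli (2 * k + 2) /
        (2 * k + 2) := by
  rw [integral_pow_mul_comp_div (fun v ↦ sigmoid (-v)) _ two_pos,
    integral_pow_odd_mul_sigmoid_neg]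
  ring

lemma H_eq_sigmoid_add_sigmoid (x y : ℝ) :
    H x y = sigmoid (-((x + y) / 2)) + sigmoid (-((x - y) / 2)) := by
  simp [H, sigmoid_def]

lemma integrableOn_pow_mul_sigmoid_neg_half (n : ℕ) (t : ℝ) :
    IntegrableOn (fun x ↦ x ^ n * sigmoid (-((x + t) / 2))) (Ioi 0) := by
  convert! integrableOn_Ioi_pow_mul_sigmoid_neg n one_half_pos (t / 2) 0 using 5
  ring

lemma integrableOn_pow_mul_H (n : ℕ) (t : ℝ) :
    IntegrableOn (fun x ↦ x ^ n * H x t) (Ioi 0) := by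
  simp_rw [H_eq_sigmoid_add_sigmoid, mul_add]
  exact (integrableOn_pow_mul_sigmoid_neg_half n t).add
    (integrableOn_pow_mul_sigmoid_neg_half n (-t))

theorem integral_pow_odd_mul_H (k : ℕ) (t : ℝ) :
    ∫ x in Ioi 0, x ^ (2 * k + 1) * H x t =
      t ^ (2 * k + 2) / (2 * k + 2) + ∑ i ∈ Finset.range (k + 1),
        (2 * k + 1).choose (2 * i + 1) * t ^ (2 * (k - i)) *
          ((-1) ^ i * (2 * π) ^ (2 * i + 2) * (2 ^ (2 * i + 1) - 1) * bernoulli (2 * i + 2) /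
            (i + 1)) := by
  have hcont : Continuous fun u : ℝ ↦ sigmoid (-(u / 2)) := by fun_prop
  have hneg (u : ℝ) : sigmoid (-(-u / 2)) = 1 - sigmoid (-(u / 2)) := by
    rw [neg_div, sigmoid_neg]
  have hmoment (n : ℕ) : IntegrableOn (fun u ↦ u ^ n * sigmoid (-(u / 2))) (Ioi 0) := by
    simpa using integrableOn_pow_mul_sigmoid_neg_half n 0
  simp_rw [H_eq_sigmoid_add_sigmoid]
  rw [integral_Ioi_odd_mul_translates (f := fun u ↦ sigmoid (-(u / 2))) (by fun_prop)
      (fun x ↦ (odd_two_mul_add_one k).neg_pow x) hcont.locallyIntegrable hneg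
      (integrableOn_pow_mul_sigmoid_neg_half (2 * k + 1)),
    integral_sub_pow_odd_add_add_pow_odd_mul fun i _ ↦ hmoment _, integral_pow, add_comm,
    Finset.mul_sum]
  congr 1
  · push_cast
    ring
  · refine Finset.sum_congr rfl fun i _ ↦ ?_
    rw [integral_pow_odd_mul_sigmoid_neg_half]
    field_simp

theorem integral_x5_H (t : ℝ) :
    IntegrableOn (fun x : ℝ => x ^ 5 * H x t) (Set.Ioi 0) ∧
    ∫ x in Set.Ioi (0 : ℝ), x ^ 5 * H x t =
      t ^ 6 / 6 + 10 * π ^ 2 * t ^ 4 / 3 + 56 * π ^ 4 * t ^ 2 / 3 +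
        992 * π ^ 6 / 63 := by
  refine ⟨integrableOn_pow_mul_H 5 t, ?_⟩
  rw [integral_pow_odd_mul_H 2 t]
  norm_num [Finset.sum_range_succ, bernoulli_four, bernoulli_six, Nat.choose]
  ring
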